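/- Let A′, A, B, B′ be finite types. Let σ be a matrix indexed by ((A′×A)×B′)×((A′×A)×B′) belonging to SEPcone((A′×A):B′), and let J be a matrix indexed by (A×B)×(A×B) belonging to SEPcone(A:B). Define the matrix γ, indexed by (A′×(B×B′))×(A′×(B×B′)), by γ((a′,(b,c)),(a′₁,(b₁,c₁))) := ∑_{a,a₁} σ(((a′,a),c),((a′₁,a₁),c₁)) · J((a,b),(a₁,b₁)) (the result of applying the completely positive map with Choi matrix J to the A-subsystem of σ). Then γ ∈ SEPcone(A′:(B×B′)). (This says that an entanglement-breaking subchannel applied to a state separable across A′A:B′ produces an operator separable across A′:BB′, the key step in the amortization inequality for the geometric Rényi relative entropy of entanglement.) -/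

import Mathlib

open Matrix Kronecker ComplexOrder

/-- The Loewner order: `A ≤ B` iff `B - A` is positive semidefinite. -/
def Loewner {n : Type*} [Fintype n] (A B : Matrix n n ℂ) : Prop := (B - A).PosSemidef

/-- Real matrix power via the spectral decomposition, with the convention `0 ^ β = 0`
(so negative powers are Moore–Penrose pseudo-inverses on the support); defined to be `0`
on non-Hermitian matrices. -/
noncomputable def mpow {n : Type*} [Fintype n] [DecidableEq n] (A : Matrix n n ℂ) (β : ℝ) :
    Matrix n n ℂ :=
  if hA : A.IsHermitian then
    (hA.eigenvectorUnitary : Matrix n n ℂ) *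
      Matrix.diagonal (fun i =>
        (Complex.ofReal (if hA.eigenvalues i = 0 then 0 else (hA.eigenvalues i) ^ β))) *
      (star (hA.eigenvectorUnitary : Matrix n n ℂ))
  else 0

/-- Matrix logarithm via the spectral decomposition (with `Real.log 0 = 0` on the kernel);
defined to be `0` on non-Hermitian matrices. -/
noncomputable def mlog {n : Type*} [Fintype n] [DecidableEq n] (A : Matrix n n ℂ) :
    Matrix n n ℂ :=
  if hA : A.IsHermitian then
    (hA.eigenvectorUnitary : Matrix n n ℂ) *
      Matrix.diagonal (fun i => (Complex.ofReal (Real.log (hA.eigenvalues i)))) *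
      (star (hA.eigenvectorUnitary : Matrix n n ℂ))
  else 0

/-- Weighted matrix geometric mean `G_β(X,Y) = X^{1/2} (X^{-1/2} Y X^{-1/2})^β X^{1/2}`. -/
noncomputable def geomMean {n : Type*} [Fintype n] [DecidableEq n] (β : ℝ)
    (X Y : Matrix n n ℂ) : Matrix n n ℂ :=
  mpow X (1/2) * mpow (mpow X (-(1/2)) * Y * mpow X (-(1/2))) β * mpow X (1/2)

/-- Operator relative entropy `D_op(X,Y) = X^{1/2} log(X^{1/2} Y⁻¹ X^{1/2}) X^{1/2}`. -/
noncomputable def Dop {n : Type*} [Fintype n] [DecidableEq n] (X Y : Matrix n n ℂ) :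
    Matrix n n ℂ :=
  mpow X (1/2) * mlog (mpow X (1/2) * Y⁻¹ * mpow X (1/2)) * mpow X (1/2)

/-- Geometric Rényi divergence `D̂_α(ρ‖σ) = (α-1)⁻¹ log tr G_{1-α}(ρ,σ)`. -/
noncomputable def Dhat {n : Type*} [Fintype n] [DecidableEq n] (α : ℝ)
    (ρ σ : Matrix n n ℂ) : ℝ :=
  (α - 1)⁻¹ * Real.log ((geomMean (1 - α) ρ σ).trace.re)

/-- Max-relative entropy `D_max(ρ‖σ) = log inf {t : ρ ≤ t σ}`. -/
noncomputable def Dmax {n : Type*} [Fintype n] (ρ σ : Matrix n n ℂ) : ℝ :=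
  Real.log (sInf {t : ℝ | Loewner ρ (t • σ)})

/-- Umegaki relative entropy `D(ρ‖σ) = tr[ρ (log ρ - log σ)]`. -/
noncomputable def Dum {n : Type*} [Fintype n] [DecidableEq n] (ρ σ : Matrix n n ℂ) : ℝ :=
  ((ρ * (mlog ρ - mlog σ)).trace).re

/-- Sandwiched Rényi divergence. -/
noncomputable def Dsand {n : Type*} [Fintype n] [DecidableEq n] (α : ℝ)
    (ρ σ : Matrix n n ℂ) : ℝ :=
  (α - 1)⁻¹ *
    Real.log ((mpow (mpow σ ((1 - α)/(2*α)) * ρ * mpow σ ((1 - α)/(2*α))) α).trace.re)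

/-- Petz Rényi divergence. -/
noncomputable def Dpetz {n : Type*} [Fintype n] [DecidableEq n] (α : ℝ)
    (ρ σ : Matrix n n ℂ) : ℝ :=
  (α - 1)⁻¹ * Real.log ((mpow ρ α * mpow σ (1 - α)).trace.re)

/-- Partial trace over the second tensor factor. -/
noncomputable def ptrB {A B : Type*} [Fintype B] (M : Matrix (A × B) (A × B) ℂ) :
    Matrix A A ℂ :=
  Matrix.of fun a a' => ∑ b, M (a, b) (a', b)

/-- Partial transpose on the second tensor factor. -/
def ptB {A B : Type*} (M : Matrix (A × B) (A × B) ℂ) : Matrix (A × B) (A × B) ℂ :=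
  Matrix.of fun x y => M (x.1, y.2) (y.1, x.2)

/-- Largest eigenvalue of a Hermitian matrix (`0` on non-Hermitian matrices). -/
noncomputable def lamMax {n : Type*} [Fintype n] [DecidableEq n] (M : Matrix n n ℂ) : ℝ :=
  if hM : M.IsHermitian then ⨆ i, hM.eigenvalues i else 0

/-- The action `Λ_J(ρ)` on the `A`-subsystem of the CP map with Choi matrix `J`. -/
noncomputable def chanApply {R A B : Type*} [Fintype A] (J : Matrix (A × B) (A × B) ℂ)
    (ρ : Matrix (R × A) (R × A) ℂ) : Matrix (R × B) (R × B) ℂ :=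
  Matrix.of fun x y => ∑ a, ∑ a', ρ (x.1, a) (y.1, a') * J (a, x.2) (a', y.2)

/-- Cone of separable operators: finite sums of Kronecker products of PSD matrices. -/
def SEPcone (A B : Type*) [Fintype A] [Fintype B] : Set (Matrix (A × B) (A × B) ℂ) :=
  { M | ∃ (k : ℕ) (P : Fin k → Matrix A A ℂ) (Q : Fin k → Matrix B B ℂ),
      (∀ i, (P i).PosSemidef) ∧ (∀ i, (Q i).PosSemidef) ∧ M = ∑ i, (P i) ⊗ₖ (Q i) }

/-- Trace norm `‖X‖₁ = tr √(X* X)`. -/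
noncomputable def traceNorm {n : Type*} [Fintype n] [DecidableEq n] (X : Matrix n n ℂ) : ℝ :=
  ((mpow (Xᴴ * X) (1/2)).trace).re

/-- Moore–Penrose pseudo-inverse of a PSD matrix. -/
noncomputable def mpinv {n : Type*} [Fintype n] [DecidableEq n] (M : Matrix n n ℂ) :
    Matrix n n ℂ :=
  mpow M (-1)

/-- Link product of Choi matrices (Choi matrix of the composed map). -/
noncomputable def linkProd {A B C : Type*} [Fintype B] (J₁ : Matrix (A × B) (A × B) ℂ)
    (J₂ : Matrix (B × C) (B × C) ℂ) : Matrix (A × C) (A × C) ℂ :=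
  Matrix.of fun x y => ∑ b, ∑ b', J₁ (x.1, b) (y.1, b') * J₂ (b, x.2) (b', y.2)

/-!
A channel whose Choi matrix is a sum of products `Y ⊗ S` is entanglement breaking: on a positive
semidefinite `ρ` on `R × A` it returns the sum of the products `Tr_A[ρ (1 ⊗ Yᵀ)] ⊗ S`. The first
factor is the sum of all blocks of the Schur product of `ρ` with the pullback of `Y` along
`R × A → A`, so it is positive semidefinite. On one term `P ⊗ Q` of `σ`, the channel turns `P` into
a separable operator, while `Q` is a bystander that regroups with the output on `B`.
-/

section BlockSum

variable {R A α : Type*} [Fintype A]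

/-- The sum of all the `R × R` blocks of a matrix on `R × A`, both on and off the diagonal:
`∑ a a', (1 ⊗ ⟨a|) M (1 ⊗ |a'⟩)`. Unlike the partial trace `ptrB`, it pairs each `a` with every
`a'`, as the action of a Choi matrix does. -/
def blockSum [AddCommMonoid α] (M : Matrix (R × A) (R × A) α) : Matrix R R α :=
  Matrix.of fun x y => ∑ a, ∑ a', M (x, a) (y, a')

theorem blockSum_eq_submatrix_one_mul_mul [Fintype R] [DecidableEq R] [Semiring α]
    (M : Matrix (R × A) (R × A) α) :
    blockSum M =
      (1 : Matrix R R α).submatrix id (Prod.fst : R × A → R) * M *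
        (1 : Matrix R R α).submatrix (Prod.fst : R × A → R) id := by
  ext x y
  simp only [blockSum, of_apply, mul_apply, submatrix_apply, one_apply, id_eq,
    Fintype.sum_prod_type_right, ite_mul, mul_ite, one_mul, zero_mul, mul_one, mul_zero,
    Fintype.sum_ite_eq, Fintype.sum_ite_eq']
  exact Finset.sum_comm

theorem posSemidef_blockSum [Finite R] [Ring α] [PartialOrder α] [StarRing α]
    {M : Matrix (R × A) (R × A) α} (hM : M.PosSemidef) : (blockSum M).PosSemidef := by
  classical
  have := Fintype.ofFinite R
  rw [blockSum_eq_submatrix_one_mul_mul]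
  simpa only [conjTranspose_submatrix, conjTranspose_one] using
    hM.conjTranspose_mul_mul_same ((1 : Matrix R R α).submatrix Prod.fst id)

end BlockSum

section SeparableCone

variable {A B C ι : Type*} [Fintype A] [Fintype B] [Fintype C] [Fintype ι]

theorem sum_kronecker_mem_SEPcone {P : ι → Matrix A A ℂ} {Q : ι → Matrix B B ℂ}
    (hP : ∀ i, (P i).PosSemidef) (hQ : ∀ i, (Q i).PosSemidef) :
    ∑ i, P i ⊗ₖ Q i ∈ SEPcone A B := by
  let e := (Fintype.equivFin ι).symm
  exact ⟨Fintype.card ι, P ∘ e, Q ∘ e, fun i => hP (e i), fun i => hQ (e i),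
    (e.sum_comp fun i => P i ⊗ₖ Q i).symm⟩

theorem sum_mem_SEPcone {M : ι → Matrix (A × B) (A × B) ℂ} (hM : ∀ i, M i ∈ SEPcone A B) :
    ∑ i, M i ∈ SEPcone A B := by
  choose k P Q hP hQ hPQ using hM
  have hsum : ∑ i, M i = ∑ p : Σ i, Fin (k i), P p.1 p.2 ⊗ₖ Q p.1 p.2 := by
    simp only [hPQ, Fintype.sum_sigma]
  rw [hsum]
  exact sum_kronecker_mem_SEPcone (fun p => hP p.1 p.2) fun p => hQ p.1 p.2

theorem reindex_prodAssoc_kronecker_mem_SEPcone {M : Matrix (A × B) (A × B) ℂ}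
    (hM : M ∈ SEPcone A B) {Q : Matrix C C ℂ} (hQ : Q.PosSemidef) :
    reindex (Equiv.prodAssoc A B C) (Equiv.prodAssoc A B C) (M ⊗ₖ Q) ∈ SEPcone A (B × C) := by
  obtain ⟨k, P, S, hP, hS, rfl⟩ := hM
  have hsum : reindex (Equiv.prodAssoc A B C) (Equiv.prodAssoc A B C) ((∑ i, P i ⊗ₖ S i) ⊗ₖ Q) =
      ∑ i, P i ⊗ₖ (S i ⊗ₖ Q) := by
    ext x y
    simp [Matrix.sum_apply, Finset.sum_mul, mul_assoc]
  rw [hsum]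
  exact sum_kronecker_mem_SEPcone hP fun i => (hS i).kronecker hQ

end SeparableCone

section ChannelAction

variable {R A B C ι : Type*} [Fintype A]

theorem chanApply_sum_left [Fintype ι] (J : ι → Matrix (A × B) (A × B) ℂ)
    (ρ : Matrix (R × A) (R × A) ℂ) : chanApply (∑ i, J i) ρ = ∑ i, chanApply (J i) ρ := by
  ext x y
  simp only [chanApply, of_apply, Matrix.sum_apply, Finset.mul_sum]
  simp only [Finset.sum_comm (t := (Finset.univ : Finset ι))]

theorem chanApply_kronecker (Y : Matrix A A ℂ) (S : Matrix B B ℂ) (ρ : Matrix (R × A) (R × A) ℂ) :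
    chanApply (Y ⊗ₖ S) ρ = blockSum (ρ ⊙ Y.submatrix Prod.snd Prod.snd) ⊗ₖ S := by
  ext x y
  simp only [chanApply, blockSum, of_apply, kroneckerMap_apply, hadamard_apply, submatrix_apply,
    Finset.sum_mul, mul_assoc]

theorem chanApply_mem_SEPcone [Fintype R] [Fintype B] {J : Matrix (A × B) (A × B) ℂ}
    (hJ : J ∈ SEPcone A B) {ρ : Matrix (R × A) (R × A) ℂ} (hρ : ρ.PosSemidef) :
    chanApply J ρ ∈ SEPcone R B := by
  obtain ⟨k, Y, S, hY, hS, rfl⟩ := hJ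
  simp only [chanApply_sum_left, chanApply_kronecker]
  exact sum_kronecker_mem_SEPcone
    (fun i => posSemidef_blockSum (hρ.hadamard ((hY i).submatrix Prod.snd))) hS

/-- The action `Λ_J ⊗ id_C` on an operator on `RA : C`, where `Λ_J` acts on the `A`-subsystem.
The output is indexed by `R × (B × C)`, so that the bystander `C` is grouped with the output `B`. -/
def chanApplyMiddle (J : Matrix (A × B) (A × B) ℂ) (σ : Matrix ((R × A) × C) ((R × A) × C) ℂ) :
    Matrix (R × (B × C)) (R × (B × C)) ℂ :=
  Matrix.of fun x y =>
    ∑ a, ∑ a', σ ((x.1, a), x.2.2) ((y.1, a'), y.2.2) * J (a, x.2.1) (a', y.2.1)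

theorem chanApplyMiddle_sum_right [Fintype ι] (J : Matrix (A × B) (A × B) ℂ)
    (σ : ι → Matrix ((R × A) × C) ((R × A) × C) ℂ) :
    chanApplyMiddle J (∑ i, σ i) = ∑ i, chanApplyMiddle J (σ i) := by
  ext x y
  simp only [chanApplyMiddle, of_apply, Matrix.sum_apply, Finset.sum_mul]
  simp only [Finset.sum_comm (t := (Finset.univ : Finset ι))]

theorem chanApplyMiddle_kronecker (J : Matrix (A × B) (A × B) ℂ) (ρ : Matrix (R × A) (R × A) ℂ)
    (Q : Matrix C C ℂ) :
    chanApplyMiddle J (ρ ⊗ₖ Q) =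
      reindex (Equiv.prodAssoc R B C) (Equiv.prodAssoc R B C) (chanApply J ρ ⊗ₖ Q) := by
  ext x y
  simp [chanApplyMiddle, chanApply, Finset.sum_mul, mul_right_comm]

end ChannelAction

/-- applying an entanglement-breaking subchannel (separable Choi matrix `J`)
to the `A`-subsystem of an operator separable across `A′A : B′` yields an operator
separable across `A′ : BB′`. -/
theorem eb_channel_preserves_separability {A' A B B' : Type*}
    [Fintype A'] [Fintype A] [Fintype B] [Fintype B']
    (σ : Matrix ((A' × A) × B') ((A' × A) × B') ℂ) (hσ : σ ∈ SEPcone (A' × A) B')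
    (J : Matrix (A × B) (A × B) ℂ) (hJ : J ∈ SEPcone A B) :
    (Matrix.of fun (x y : A' × (B × B')) =>
        ∑ a, ∑ a₁, σ ((x.1, a), x.2.2) ((y.1, a₁), y.2.2) * J (a, x.2.1) (a₁, y.2.1)) ∈
      SEPcone A' (B × B') := by
  change chanApplyMiddle J σ ∈ SEPcone A' (B × B')
  obtain ⟨k, P, Q, hP, hQ, rfl⟩ := hσ
  simp only [chanApplyMiddle_sum_right, chanApplyMiddle_kronecker]
  exact sum_mem_SEPcone fun i =>
    reindex_prodAssoc_kronecker_mem_SEPcone (chanApply_mem_SEPcone hJ (hP i)) (hQ i)
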